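/- Under the stated setup and assumptions, the approximate singular values satisfy σ_j(A) ≥ σ_j(QQ*A) ≥ σ_j(A) / √(1 + γ_j^{4q+2}·‖Ω_2Ω_1†‖₂²) for every j = 1,…,k, where σ_j(·) denotes the j-th largest singular value. -/

import Mathlib

open scoped ENNReal
open Matrix

/-- The `j`-th largest singular value (0-indexed) of a complex matrix,
obtained as the decreasingly sorted square roots of the eigenvalues of `Mᴴ * M`. -/
noncomputable def sval {m n : ℕ} (M : Matrix (Fin m) (Fin n) ℂ) (j : ℕ) : ℝ :=
  (List.insertionSort (· ≥ ·)
    ((List.ofFn (Matrix.isHermitian_conjTranspose_mul_self M).eigenvalues).map Real.sqrt)).getD j 0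

/-- The Schatten-`p` norm (`p = ∞` gives the spectral norm). -/
noncomputable def schatten {m n : ℕ} (p : ℝ≥0∞) (M : Matrix (Fin m) (Fin n) ℂ) : ℝ :=
  if p = ⊤ then sval M 0
  else (∑ j ∈ Finset.range n, sval M j ^ p.toReal) ^ (1 / p.toReal)

/-- Moore–Penrose pseudoinverse of a full-row-rank matrix. -/
noncomputable def rpinv {a b : ℕ} (M : Matrix (Fin a) (Fin b) ℂ) : Matrix (Fin b) (Fin a) ℂ :=
  Mᴴ * (M * Mᴴ)⁻¹

/-- Rectangular diagonal matrix with entries `σ (off), σ (off+1), …` on the diagonal. -/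
noncomputable def diagRect (σ : ℕ → ℝ) (off a b : ℕ) : Matrix (Fin a) (Fin b) ℂ :=
  Matrix.of fun i j => if (i : ℕ) = (j : ℕ) then (σ (off + (i : ℕ)) : ℂ) else 0

/-- The first `b` columns of a matrix with `b + c` columns. -/
def colsL {a b c : ℕ} (M : Matrix (Fin a) (Fin (b + c)) ℂ) : Matrix (Fin a) (Fin b) ℂ :=
  M.submatrix id (Fin.castAdd c)

/-- The last `c` columns of a matrix with `b + c` columns. -/
def colsR {a b c : ℕ} (M : Matrix (Fin a) (Fin (b + c)) ℂ) : Matrix (Fin a) (Fin c) ℂ :=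
  M.submatrix id (Fin.natAdd b)

/-- The squared Euclidean norm of a complex vector. -/
noncomputable def normSqVec {ι : Type*} [Fintype ι] (x : ι → ℂ) : ℝ := ∑ i, ‖x i‖ ^ 2

lemma normSqVec_nonneg {ι : Type*} [Fintype ι] (x : ι → ℂ) : 0 ≤ normSqVec x :=
  Finset.sum_nonneg fun _ _ => by positivity

lemma normSqVec_pos {ι : Type*} [Fintype ι] {x : ι → ℂ} (hx : x ≠ 0) : 0 < normSqVec x := by
  obtain ⟨i, hi⟩ := Function.ne_iff.mp hx
  exact Finset.sum_pos' (fun _ _ => by positivity)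
    ⟨i, Finset.mem_univ i, by have := norm_pos_iff.mpr hi; positivity⟩

lemma normSqVec_eq_re {ι : Type*} [Fintype ι] (x : ι → ℂ) :
    normSqVec x = (star x ⬝ᵥ x).re := by
  simp only [normSqVec, dotProduct, Complex.re_sum]
  refine Finset.sum_congr rfl fun i _ => ?_
  simp [Complex.sq_norm, Complex.normSq_apply]

lemma normSqVec_mulVec {ι κ : Type*} [Fintype ι] [Fintype κ] (M : Matrix ι κ ℂ) (x : κ → ℂ) :
    normSqVec (M *ᵥ x) = (star x ⬝ᵥ ((Mᴴ * M) *ᵥ x)).re := by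
  rw [normSqVec_eq_re, star_mulVec, ← dotProduct_mulVec, mulVec_mulVec]

lemma normSqVec_mulVec_of_isometry {ι κ : Type*} [Fintype ι] [Fintype κ] [DecidableEq κ]
    {M : Matrix ι κ ℂ} (hM : Mᴴ * M = 1) (x : κ → ℂ) :
    normSqVec (M *ᵥ x) = normSqVec x := by
  rw [normSqVec_mulVec, hM, one_mulVec, normSqVec_eq_re]

lemma re_dotProduct_sq_le {ι : Type*} [Fintype ι] (x y : ι → ℂ) :
    (star x ⬝ᵥ y).re ^ 2 ≤ normSqVec x * normSqVec y := by
  have h : |(star x ⬝ᵥ y).re| ≤ ∑ i, ‖x i‖ * ‖y i‖ := by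
    refine (Complex.abs_re_le_norm _).trans ((norm_sum_le _ _).trans_eq ?_)
    simp
  calc (star x ⬝ᵥ y).re ^ 2 = |(star x ⬝ᵥ y).re| ^ 2 := (sq_abs _).symm
    _ ≤ (∑ i, ‖x i‖ * ‖y i‖) ^ 2 := by gcongr
    _ ≤ _ := Finset.sum_mul_sq_le_sq_mul_sq _ _ _

/-- A lower bound for `Mᴴ` at `y` passes to `M` at `Mᴴ y`. -/
lemma le_normSqVec_mulVec_conjTranspose {ι κ : Type*} [Fintype ι] [Fintype κ]
    (M : Matrix ι κ ℂ) (y : ι → ℂ) {c : ℝ}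
    (h : c * normSqVec y ≤ normSqVec (Mᴴ *ᵥ y)) :
    c * normSqVec (Mᴴ *ᵥ y) ≤ normSqVec (M *ᵥ (Mᴴ *ᵥ y)) := by
  have hcs := re_dotProduct_sq_le y (M *ᵥ (Mᴴ *ᵥ y))
  have heq := normSqVec_mulVec Mᴴ y
  rw [conjTranspose_conjTranspose, ← mulVec_mulVec] at heq
  rw [← heq] at hcs
  have ha := normSqVec_nonneg (Mᴴ *ᵥ y)
  have hb := normSqVec_nonneg (M *ᵥ (Mᴴ *ᵥ y))
  have hy := normSqVec_nonneg y
  rcases ha.eq_or_lt with ha | ha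
  · rw [← ha]; simpa using hb
  rcases le_total c 0 with hc | hc
  · nlinarith
  refine le_of_mul_le_mul_right ?_ ha
  calc _ = c * normSqVec (Mᴴ *ᵥ y) ^ 2 := by ring
    _ ≤ c * (normSqVec y * normSqVec (M *ᵥ (Mᴴ *ᵥ y))) := by gcongr
    _ = (c * normSqVec y) * normSqVec (M *ᵥ (Mᴴ *ᵥ y)) := by ring
    _ ≤ normSqVec (Mᴴ *ᵥ y) * normSqVec (M *ᵥ (Mᴴ *ᵥ y)) := by gcongr
    _ = _ := mul_comm _ _

open scoped ComplexOrder in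
/-- Right singular vectors ordered by decreasing singular value. -/
lemma exists_right_singular_basis {m n : ℕ} (M : Matrix (Fin m) (Fin n) ℂ) :
    ∃ P : Matrix (Fin n) (Fin n) ℂ, Pᴴ * P = 1 ∧ P * Pᴴ = 1 ∧
      (∀ i j : Fin n, i ≤ j → sval M j ≤ sval M i) ∧ (∀ i : Fin n, 0 ≤ sval M i) ∧
      ∀ x, normSqVec (M *ᵥ x) = ∑ i : Fin n, sval M i ^ 2 * ‖(Pᴴ *ᵥ x) i‖ ^ 2 := by
  have hM := Matrix.isHermitian_conjTranspose_mul_self M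
  have hnn : ∀ i, 0 ≤ hM.eigenvalues i := (posSemidef_conjTranspose_mul_self M).eigenvalues_nonneg
  let e := Tuple.sort fun i => -hM.eigenvalues i
  have he : Antitone (hM.eigenvalues ∘ e) := fun i j hij => by
    have := Tuple.monotone_sort (fun i => -hM.eigenvalues i) hij
    simpa [e] using this
  have hs : ∀ i : Fin n, sval M i = √(hM.eigenvalues (e i)) := by
    intro i
    have hl : List.insertionSort (· ≥ ·) ((List.ofFn hM.eigenvalues).map Real.sqrt) =
        List.ofFn (fun i => √(hM.eigenvalues (e i))) := by
      refine List.Perm.eq_of_sortedGE List.sortedGE_insertionSort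
        (Antitone.sortedGE_ofFn fun i j hij => Real.sqrt_le_sqrt (he hij)) ?_
      refine (List.perm_insertionSort _ _).trans ?_
      rw [List.map_ofFn]
      exact (Equiv.Perm.ofFn_comp_perm e (Real.sqrt ∘ hM.eigenvalues)).symm
    rw [sval, hl]
    simp
  let P₀ : Matrix (Fin n) (Fin n) ℂ := hM.eigenvectorUnitary
  have hP₀ : P₀ᴴ * P₀ = 1 := Unitary.coe_star_mul_self hM.eigenvectorUnitary
  have hP₀' : P₀ * P₀ᴴ = 1 := Unitary.coe_mul_star_self hM.eigenvectorUnitary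
  have hsp : Mᴴ * M = P₀ * diagonal (fun i => (hM.eigenvalues i : ℂ)) * P₀ᴴ := by
    have := hM.spectral_theorem
    rw [Unitary.conjStarAlgAut_apply] at this
    exact this
  refine ⟨P₀.submatrix id e, ?_, ?_, ?_, ?_, ?_⟩
  · rw [conjTranspose_submatrix, ← submatrix_mul _ _ _ _ _ Function.bijective_id, hP₀]
    simp
  · rw [conjTranspose_submatrix, ← submatrix_mul _ _ _ _ _ e.bijective, hP₀']
    simp
  · intro i j hij
    rw [hs, hs]
    exact Real.sqrt_le_sqrt (he hij)
  · intro i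
    rw [hs]
    positivity
  · intro x
    rw [normSqVec_mulVec, hsp, ← mulVec_mulVec, ← mulVec_mulVec, dotProduct_mulVec,
      show star x ᵥ* P₀ = star (P₀ᴴ *ᵥ x) by simp [star_mulVec], dotProduct, Complex.re_sum,
      ← Equiv.sum_comp e]
    refine Finset.sum_congr rfl fun i _ => ?_
    rw [hs, Real.sq_sqrt (hnn _)]
    have h : ((P₀.submatrix id e)ᴴ *ᵥ x) i = (P₀ᴴ *ᵥ x) (e i) := rfl
    rw [h, mulVec_diagonal, Complex.sq_norm, Complex.normSq_apply]
    simp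
    ring

/-- The max-min half of the Courant–Fischer characterization of singular values. -/
lemma le_sval_of_le_normSqVec {m n : ℕ} (M : Matrix (Fin m) (Fin n) ℂ) (j : Fin n)
    (F : Matrix (Fin n) (Fin (j + 1)) ℂ) {c : ℝ}
    (h : ∀ z, z ≠ 0 → F *ᵥ z ≠ 0 ∧ c ^ 2 * normSqVec (F *ᵥ z) ≤ normSqVec (M *ᵥ (F *ᵥ z))) :
    c ≤ sval M j := by
  obtain ⟨P, hP, hP', hanti, hnn, hM⟩ := exists_right_singular_basis M
  let g := ((Pᴴ * F).submatrix (Fin.castLE j.2.le) id).mulVecLin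
  obtain ⟨z, hz, hz0⟩ := (Submodule.ne_bot_iff _).mp
    (LinearMap.ker_ne_bot_of_finrank_lt (f := g) (by simp))
  obtain ⟨hF, hc⟩ := h z hz0
  have hzero : ∀ i : Fin n, i < j → (Pᴴ *ᵥ (F *ᵥ z)) i = 0 := fun i hi => by
    have := congrFun (LinearMap.mem_ker.mp hz) ⟨i, hi⟩
    rw [mulVec_mulVec]
    exact this
  have hle : normSqVec (M *ᵥ (F *ᵥ z)) ≤ sval M j ^ 2 * normSqVec (F *ᵥ z) := by
    rw [hM, ← normSqVec_mulVec_of_isometry (M := Pᴴ) (by simpa using hP') (F *ᵥ z), normSqVec,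
      Finset.mul_sum]
    refine Finset.sum_le_sum fun i _ => ?_
    rcases lt_or_ge i j with hi | hi
    · simp [hzero i hi]
    · have := hanti j i hi
      have := hnn i
      gcongr
  exact le_of_sq_le_sq (le_of_mul_le_mul_right (hc.trans hle) (normSqVec_pos hF)) (hnn j)

/-- The min-max half of the Courant–Fischer characterization of singular values. -/
lemma sval_le_of_normSqVec_le {m n : ℕ} (M : Matrix (Fin m) (Fin n) ℂ) (j : Fin n)
    (G : Matrix (Fin j) (Fin n) ℂ) {c : ℝ} (hc : 0 ≤ c)
    (h : ∀ x, G *ᵥ x = 0 → normSqVec (M *ᵥ x) ≤ c ^ 2 * normSqVec x) :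
    sval M j ≤ c := by
  obtain ⟨P, hP, hP', hanti, hnn, hM⟩ := exists_right_singular_basis M
  let E : Matrix (Fin n) (Fin (j + 1)) ℂ :=
    (1 : Matrix (Fin n) (Fin n) ℂ).submatrix id (Fin.castLE j.2)
  have hE : Eᴴ * E = 1 := by
    rw [conjTranspose_submatrix, ← submatrix_mul _ _ _ _ _ Function.bijective_id]
    simp [submatrix_one _ (Fin.castLE_injective j.2)]
  let g := (G * (P * E)).mulVecLin
  obtain ⟨z, hz, hz0⟩ := (Submodule.ne_bot_iff _).mp
    (LinearMap.ker_ne_bot_of_finrank_lt (f := g) (by simp))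
  have hker : G *ᵥ (P *ᵥ (E *ᵥ z)) = 0 := by
    simpa [g] using hz
  have hzero : ∀ i : Fin n, j < i → (E *ᵥ z) i = 0 := fun i hi => by
    rw [mulVec, dotProduct]
    refine Finset.sum_eq_zero fun l _ => ?_
    have : i ≠ Fin.castLE j.2 l := fun h => by
      have := l.2
      simp [h, Fin.lt_def] at hi
      omega
    rw [show E i l = 0 from one_apply_ne this, zero_mul]
  have hle : sval M j ^ 2 * normSqVec (E *ᵥ z) ≤ normSqVec (M *ᵥ (P *ᵥ (E *ᵥ z))) := by
    rw [hM, mulVec_mulVec _ Pᴴ, hP, one_mulVec, normSqVec, Finset.mul_sum]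
    refine Finset.sum_le_sum fun i _ => ?_
    rcases lt_or_ge j i with hi | hi
    · simp [hzero i hi]
    · have := hanti i j hi
      have := hnn j
      gcongr
  have hup := h _ hker
  rw [normSqVec_mulVec_of_isometry hP] at hup
  have hpos : 0 < normSqVec (E *ᵥ z) := by
    rw [normSqVec_mulVec_of_isometry hE]
    exact normSqVec_pos hz0
  exact le_of_sq_le_sq (le_of_mul_le_mul_right (hle.trans hup) hpos) hc

/-- The largest singular value bounds the operator norm. -/
lemma normSqVec_mulVec_le_sval_zero {m n : ℕ} (M : Matrix (Fin m) (Fin n) ℂ) (x : Fin n → ℂ) :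
    normSqVec (M *ᵥ x) ≤ sval M 0 ^ 2 * normSqVec x := by
  obtain ⟨P, hP, hP', hanti, hnn, hM⟩ := exists_right_singular_basis M
  rw [hM, ← normSqVec_mulVec_of_isometry (M := Pᴴ) (by simpa using hP') x, normSqVec,
    Finset.mul_sum]
  refine Finset.sum_le_sum fun i _ => ?_
  have := hanti ⟨0, i.pos⟩ i (Nat.zero_le _)
  have := hnn i
  gcongr

lemma diagRect_conjTranspose (σ : ℕ → ℝ) (off a b : ℕ) :
    (diagRect σ off a b)ᴴ = diagRect σ off b a := by
  ext i j
  simp only [diagRect, conjTranspose_apply, of_apply]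
  split_ifs with h h' h'
  · simp [h]
  · exact absurd h.symm h'
  · exact absurd h'.symm h
  · simp

lemma diagRect_mulVec_apply (σ : ℕ → ℝ) (a b : ℕ) (x : Fin b → ℂ) (i : Fin a) :
    (diagRect σ 0 a b *ᵥ x) i = if h : (i : ℕ) < b then σ i * x ⟨i, h⟩ else 0 := by
  simp only [diagRect, mulVec, dotProduct, of_apply, zero_add]
  split_ifs with h
  · rw [Finset.sum_eq_single ⟨i, h⟩]
    · simp
    · intro l _ hl
      have : (i : ℕ) ≠ l := fun h' => hl (Fin.ext h'.symm)
      simp [this]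
    · simp
  · refine Finset.sum_eq_zero fun l _ => ?_
    have : (i : ℕ) ≠ l := fun h' => h (h' ▸ l.2)
    simp [this]

lemma diagRect_mul_conjTranspose_pow_mul (σ : ℕ → ℝ) (a b q : ℕ) :
    (diagRect σ 0 a b * (diagRect σ 0 a b)ᴴ) ^ q * diagRect σ 0 a b =
      diagRect (fun i => σ i ^ (2 * q + 1)) 0 a b := by
  rw [diagRect_conjTranspose]
  induction q with
  | zero => simp
  | succ q ih =>
    rw [pow_succ', Matrix.mul_assoc, ih]
    refine Matrix.ext_of_mulVec_single fun l => ?_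
    funext i
    rw [Matrix.mul_assoc, ← mulVec_mulVec, ← mulVec_mulVec]
    simp only [diagRect_mulVec_apply]
    split_ifs
    · simp
      ring
    · omega
    · rfl

lemma normSqVec_diagRect_mulVec (σ : ℕ → ℝ) (a b : ℕ) (x : Fin b → ℂ) :
    normSqVec (diagRect σ 0 a b *ᵥ x) =
      ∑ i : Fin b, (if (i : ℕ) < a then σ i ^ 2 * ‖x i‖ ^ 2 else 0) := by
  rw [normSqVec_mulVec, diagRect_conjTranspose, dotProduct, Complex.re_sum]
  refine Finset.sum_congr rfl fun i _ => ?_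
  rw [← mulVec_mulVec, diagRect_mulVec_apply]
  split_ifs with h
  · rw [diagRect_mulVec_apply, dif_pos i.2, Complex.sq_norm, Complex.normSq_apply]
    simp
    ring
  · simp

lemma normSqVec_diagRect_mulVec_le (σ : ℕ → ℝ) {a b : ℕ} (x : Fin b → ℂ) {c : ℝ}
    (h : ∀ i : Fin b, x i ≠ 0 → σ i ^ 2 ≤ c) (hc : 0 ≤ c) :
    normSqVec (diagRect σ 0 a b *ᵥ x) ≤ c * normSqVec x := by
  rw [normSqVec_diagRect_mulVec, normSqVec, Finset.mul_sum]
  refine Finset.sum_le_sum fun i _ => ?_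
  by_cases hx : x i = 0
  · simp [hx]
  split_ifs
  · have := h i hx
    gcongr
  · positivity

lemma pow_mul_eq_of_unitary {m n : Type*} [Fintype m] [Fintype n] [DecidableEq m] [DecidableEq n]
    {U : Matrix m m ℂ} {V : Matrix n n ℂ} (hU : Uᴴ * U = 1) (hV : Vᴴ * V = 1)
    (D : Matrix m n ℂ) (q : ℕ) :
    ((U * D * Vᴴ) * (U * D * Vᴴ)ᴴ) ^ q * (U * D * Vᴴ) = U * ((D * Dᴴ) ^ q * D) * Vᴴ := by
  induction q with
  | zero => simp
  | succ q ih =>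
    rw [pow_succ', Matrix.mul_assoc, ih, pow_succ']
    simp only [conjTranspose_mul, conjTranspose_conjTranspose, Matrix.mul_assoc]
    rw [← Matrix.mul_assoc Vᴴ V, hV, Matrix.one_mul, ← Matrix.mul_assoc Uᴴ U, hU, Matrix.one_mul]

open scoped ComplexOrder in
lemma mul_rpinv {a b : ℕ} {M : Matrix (Fin a) (Fin b) ℂ} (hM : M.rank = a) :
    M * rpinv M = 1 := by
  rw [rpinv, ← Matrix.mul_assoc]
  refine Matrix.mul_nonsing_inv _ ((Matrix.isUnit_iff_isUnit_det _).mp ?_)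
  rw [← Matrix.mulVec_surjective_iff_isUnit]
  have h : (M * Mᴴ).rank = a := by rw [rank_self_mul_conjTranspose, hM]
  exact LinearMap.range_eq_top.mp
    (Submodule.eq_top_of_finrank_eq (S := (M * Mᴴ).mulVecLin.range) (by simpa [Matrix.rank] using h))

/-- Applying an orthogonal projection does not increase the norm. -/
lemma normSqVec_proj_mulVec_le {ι κ : Type*} [Fintype ι] [Fintype κ] [DecidableEq κ]
    {Q : Matrix ι κ ℂ} (hQ : Qᴴ * Q = 1) (x : ι → ℂ) :
    normSqVec ((Q * Qᴴ) *ᵥ x) ≤ normSqVec x := by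
  have heq : normSqVec ((Q * Qᴴ) *ᵥ x) = (star x ⬝ᵥ ((Q * Qᴴ) *ᵥ x)).re := by
    rw [normSqVec_mulVec, conjTranspose_mul, conjTranspose_conjTranspose, Matrix.mul_assoc,
      ← Matrix.mul_assoc Qᴴ, hQ, Matrix.one_mul]
  have hcs := re_dotProduct_sq_le x ((Q * Qᴴ) *ᵥ x)
  rw [← heq] at hcs
  have := normSqVec_nonneg x
  have := normSqVec_nonneg ((Q * Qᴴ) *ᵥ x)
  by_contra! hlt
  nlinarith

lemma conjTranspose_mulVec_castAdd {a b c : ℕ} (V : Matrix (Fin a) (Fin (b + c)) ℂ)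
    (x : Fin a → ℂ) (i : Fin b) : (Vᴴ *ᵥ x) (Fin.castAdd c i) = ((colsL V)ᴴ *ᵥ x) i := rfl

lemma conjTranspose_mulVec_natAdd {a b c : ℕ} (V : Matrix (Fin a) (Fin (b + c)) ℂ)
    (x : Fin a → ℂ) (i : Fin c) : (Vᴴ *ᵥ x) (Fin.natAdd b i) = ((colsR V)ᴴ *ᵥ x) i := rfl

/-- Theorem 4.3: accuracy of the approximate singular values. -/
theorem singular_value_accuracy
    {k m₂ n₂ ρ : ℕ} (q : ℕ) (hk : 1 ≤ k)
    (A : Matrix (Fin (k + m₂)) (Fin (k + n₂)) ℂ)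
    (U : Matrix (Fin (k + m₂)) (Fin (k + m₂)) ℂ)
    (V : Matrix (Fin (k + n₂)) (Fin (k + n₂)) ℂ)
    (σ : ℕ → ℝ)
    (hU : Uᴴ * U = 1) (hU' : U * Uᴴ = 1)
    (hV : Vᴴ * V = 1) (hV' : V * Vᴴ = 1)
    (hσ0 : ∀ i, 0 ≤ σ i) (hσm : ∀ i j, i ≤ j → σ j ≤ σ i)
    (hA : A = U * diagRect σ 0 (k + m₂) (k + n₂) * Vᴴ)
    (hrank : 0 < σ (k - 1)) (hgap : σ k < σ (k - 1))
    (Ω : Matrix (Fin (k + n₂)) (Fin (k + ρ)) ℂ)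
    (hΩ : ((colsL V)ᴴ * Ω).rank = k)
    (Q : Matrix (Fin (k + m₂)) (Fin (k + ρ)) ℂ)
    (R : Matrix (Fin (k + ρ)) (Fin (k + ρ)) ℂ)
    (hQ : Qᴴ * Q = 1) (hR : R.BlockTriangular id)
    (hQR : (A * Aᴴ) ^ q * A * Ω = Q * R)
    :
    ∀ j : Fin k,
      sval (Q * Qᴴ * A) (j : ℕ) ≤ σ (j : ℕ) ∧
      σ (j : ℕ) / Real.sqrt (1 + (σ k / σ (j : ℕ)) ^ (4 * q + 2) * (sval ((colsR V)ᴴ * Ω * rpinv ((colsL V)ᴴ * Ω)) 0) ^ 2) ≤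
        sval (Q * Qᴴ * A) (j : ℕ) := by
  intro j
  have hVadj : Vᴴᴴ * Vᴴ = 1 := by simpa using hV'
  refine ⟨sval_le_of_normSqVec_le _ (Fin.castAdd n₂ j)
    (Vᴴ.submatrix (Fin.castLE (Fin.castAdd n₂ j).2.le) id) (hσ0 j) fun x hx => ?_, ?_⟩
  · have hzero : ∀ i : Fin (k + n₂), (i : ℕ) < j → (Vᴴ *ᵥ x) i = 0 :=
      fun i hi => congrFun hx ⟨i, hi⟩
    rw [← mulVec_mulVec]
    refine (normSqVec_proj_mulVec_le hQ _).trans ?_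
    rw [hA, Matrix.mul_assoc, ← mulVec_mulVec, normSqVec_mulVec_of_isometry hU, ← mulVec_mulVec,
      ← normSqVec_mulVec_of_isometry hVadj x]
    refine normSqVec_diagRect_mulVec_le _ _ (fun i hi => ?_) (sq_nonneg _)
    have := hσ0 i
    have := hσm j i (not_lt.mp fun h => hi (hzero i h))
    gcongr
  have hσpos : ∀ i < k, 0 < σ i := fun i hi => hrank.trans_le (hσm i (k - 1) (by omega))
  have hσj := hσpos j j.2
  set B := (colsR V)ᴴ * Ω * rpinv ((colsL V)ᴴ * Ω)
  set s := (σ k / σ j) ^ (4 * q + 2) * sval B 0 ^ 2 with hs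
  have hs0 : 0 ≤ s := by
    have := hσ0 k
    positivity
  let T := diagRect (fun i => (σ i ^ (2 * q + 1))⁻¹) 0 k (j + 1)
  let W := diagRect (fun i => σ i ^ (2 * q + 1)) 0 (k + m₂) (k + n₂) *
    (Vᴴ * (Ω * (rpinv ((colsL V)ᴴ * Ω) * T)))
  have hAq : (A * Aᴴ) ^ q * A =
      U * diagRect (fun i => σ i ^ (2 * q + 1)) 0 (k + m₂) (k + n₂) * Vᴴ := by
    rw [hA, pow_mul_eq_of_unitary hU hV, diagRect_mul_conjTranspose_pow_mul]
  -- The columns of `U * W` lie in the range of `Q`.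
  have hrange : Q * Qᴴ * (U * W) = U * W := by
    have h : U * W = Q * (R * (rpinv ((colsL V)ᴴ * Ω) * T)) := by
      rw [← Matrix.mul_assoc Q, ← hQR, hAq]
      simp only [W, Matrix.mul_assoc]
    rw [h, Matrix.mul_assoc, ← Matrix.mul_assoc Qᴴ, hQ, Matrix.one_mul]
  have hadj : (Q * Qᴴ * A)ᴴ * (U * W) = V * (diagRect σ 0 (k + n₂) (k + m₂) * W) := by
    have h : (Q * Qᴴ * A)ᴴ = Aᴴ * (Q * Qᴴ) := by simp [Matrix.mul_assoc]
    rw [h, Matrix.mul_assoc, hrange, hA]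
    simp only [conjTranspose_mul, conjTranspose_conjTranspose, diagRect_conjTranspose,
      Matrix.mul_assoc]
    rw [← Matrix.mul_assoc Uᴴ, hU, Matrix.one_mul]
  have htop : ∀ z (i : Fin k),
      (W *ᵥ z) (Fin.castAdd m₂ i) = (diagRect (fun _ => 1) 0 k (j + 1) *ᵥ z) i := by
    intro z i
    have hT : (Vᴴ *ᵥ (Ω *ᵥ (rpinv ((colsL V)ᴴ * Ω) *ᵥ (T *ᵥ z)))) (Fin.castAdd n₂ i) =
        (T *ᵥ z) i := by
      rw [conjTranspose_mulVec_castAdd, mulVec_mulVec _ (colsL V)ᴴ, mulVec_mulVec, mul_rpinv hΩ,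
        one_mulVec]
    have hi : (i : ℕ) < k + n₂ := by omega
    simp only [W, ← mulVec_mulVec]
    rw [diagRect_mulVec_apply, dif_pos (by simpa using hi)]
    erw [hT]
    simp only [T, diagRect_mulVec_apply, Fin.val_castAdd]
    have : (σ i : ℂ) ≠ 0 := Complex.ofReal_ne_zero.mpr (hσpos i i.2).ne'
    split_ifs
    · push_cast
      field_simp
    · simp
  have hbot : ∀ z (i : Fin m₂), (W *ᵥ z) (Fin.natAdd k i) =
      (diagRect (fun i => σ (k + i) ^ (2 * q + 1)) 0 m₂ n₂ *ᵥ (B *ᵥ (T *ᵥ z))) i := by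
    intro z i
    have hT : ∀ l : Fin n₂, (Vᴴ *ᵥ (Ω *ᵥ (rpinv ((colsL V)ᴴ * Ω) *ᵥ (T *ᵥ z)))) (Fin.natAdd k l) =
        (B *ᵥ (T *ᵥ z)) l := by
      intro l
      rw [conjTranspose_mulVec_natAdd, mulVec_mulVec _ (colsR V)ᴴ, mulVec_mulVec]
    simp only [W, ← mulVec_mulVec, diagRect_mulVec_apply, Fin.val_natAdd, Nat.add_lt_add_iff_left]
    split_ifs with h
    · rw [← hT ⟨i, h⟩]
      rfl
    · rfl
  have hone : ∀ z : Fin (j + 1) → ℂ,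
      ∑ i : Fin k, ‖(diagRect (fun _ => 1) 0 k (j + 1) *ᵥ z) i‖ ^ 2 = normSqVec z := by
    intro z
    refine (normSqVec_diagRect_mulVec _ _ _ z).trans (Finset.sum_congr rfl fun i _ => ?_)
    have : (i : ℕ) < k := by omega
    simp [this]
  have hupper : ∀ z, normSqVec (W *ᵥ z) ≤ (1 + s) * normSqVec z := by
    intro z
    have hT : normSqVec (T *ᵥ z) ≤ ((σ j ^ (2 * q + 1))⁻¹) ^ 2 * normSqVec z := by
      refine normSqVec_diagRect_mulVec_le _ _ (fun i _ => ?_) (sq_nonneg _)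
      have := hσm i j (by omega)
      have := hσpos i (by omega)
      gcongr
    have hD : normSqVec (diagRect (fun i => σ (k + i) ^ (2 * q + 1)) 0 m₂ n₂ *ᵥ (B *ᵥ (T *ᵥ z))) ≤
        (σ k ^ (2 * q + 1)) ^ 2 * normSqVec (B *ᵥ (T *ᵥ z)) := by
      refine normSqVec_diagRect_mulVec_le _ _ (fun i _ => ?_) (sq_nonneg _)
      have := hσm k (k + i) (by omega)
      have := hσ0 (k + i)
      gcongr
    have hsplit : normSqVec (W *ᵥ z) = normSqVec z + normSqVec
        (diagRect (fun i => σ (k + i) ^ (2 * q + 1)) 0 m₂ n₂ *ᵥ (B *ᵥ (T *ᵥ z))) := by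
      rw [normSqVec, Fin.sum_univ_add]
      simp only [htop, hbot, hone]
      rfl
    calc normSqVec (W *ᵥ z)
        ≤ normSqVec z + (σ k ^ (2 * q + 1)) ^ 2 * normSqVec (B *ᵥ (T *ᵥ z)) := by
          rw [hsplit]; gcongr
      _ ≤ normSqVec z + (σ k ^ (2 * q + 1)) ^ 2 * (sval B 0 ^ 2 *
            (((σ j ^ (2 * q + 1))⁻¹) ^ 2 * normSqVec z)) := by
          gcongr
          exact (normSqVec_mulVec_le_sval_zero B _).trans (by gcongr)
      _ = (1 + s) * normSqVec z := by
          rw [hs, div_pow, show 4 * q + 2 = (2 * q + 1) * 2 by ring, pow_mul, pow_mul]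
          field_simp
  have hlower : ∀ z, σ j ^ 2 * normSqVec z ≤
      normSqVec (diagRect σ 0 (k + n₂) (k + m₂) *ᵥ (W *ᵥ z)) := by
    intro z
    rw [normSqVec_diagRect_mulVec, Fin.sum_univ_add, ← hone, Finset.mul_sum]
    refine le_add_of_le_of_nonneg (Finset.sum_le_sum fun i _ => ?_)
      (Finset.sum_nonneg fun i _ => by positivity)
    rw [if_pos (by simp; omega), htop]
    rcases lt_or_ge (j : ℕ) i with hij | hij
    · rw [diagRect_mulVec_apply, dif_neg (by omega)]
      simp
    · have := hσm i j hij
      simp only [Fin.val_castAdd]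
      gcongr
  refine le_sval_of_le_normSqVec _ (Fin.castAdd n₂ j) ((Q * Qᴴ * A)ᴴ * (U * W)) fun z hz => ?_
  have hlow : σ j ^ 2 * normSqVec z ≤ normSqVec ((Q * Qᴴ * A)ᴴ *ᵥ ((U * W) *ᵥ z)) := by
    rw [mulVec_mulVec, hadj, ← mulVec_mulVec, normSqVec_mulVec_of_isometry hV, ← mulVec_mulVec]
    exact hlower z
  rw [← mulVec_mulVec]
  refine ⟨fun h0 => ?_, le_normSqVec_mulVec_conjTranspose _ _ (le_trans ?_ hlow)⟩
  · rw [h0] at hlow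
    have := mul_pos (pow_pos hσj 2) (normSqVec_pos hz)
    simp [normSqVec] at hlow this
    linarith
  · rw [← mulVec_mulVec, normSqVec_mulVec_of_isometry hU, div_pow, Real.sq_sqrt (by positivity)]
    calc σ j ^ 2 / (1 + s) * normSqVec (W *ᵥ z)
        ≤ σ j ^ 2 / (1 + s) * ((1 + s) * normSqVec z) := by
          gcongr
          exact hupper z
      _ = σ j ^ 2 * normSqVec z := by
          field_simp
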